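/- arXiv:2501.18035 — 2 statements merged into one kernel-verified Lean document; each statement's English description precedes it below -/
import Mathlib

section
/- Let R₀ ∈ ℂ^{m×n} be in GB(s) form, let U ∈ ℂ^{(m−s)×(m−s)} be unitary, set Q̂ = blkdiag(I_s, U) ∈ ℂ^{m×m}, and let Π ∈ ℂ^{n×n} be a permutation matrix whose underlying permutation fixes every index j with j ≤ s. Then Q̂* R₀ Π is in GB(s) form. -/
open Matrix

/-- `tailNorm R i j` is the Euclidean norm of the subvector of column `j` of `R`
consisting of the (0-based) rows `i, i+1, …, m-1`, i.e. `‖R((i+1):m, j)‖₂` in 1-based notation. -/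
noncomputable def tailNorm {m n : ℕ} (R : Matrix (Fin m) (Fin n) ℂ) (i : ℕ) (j : Fin n) : ℝ :=
  Real.sqrt (∑ p : Fin m, if i ≤ p.val then ‖R p j‖ ^ 2 else 0)

/-- `R` is in `k`-Golub–Businger form: its first `k` columns are upper-triangular, and for each
(1-based) `i ≤ k`, `|R(i,i)|` equals the maximum of `‖R(i:m, j)‖₂` over the columns `j ≥ i`. -/
def IsGB {m n : ℕ} (k : ℕ) (R : Matrix (Fin m) (Fin n) ℂ) : Prop :=
  (∀ (p : Fin m) (q : Fin n), q.val < k → q.val < p.val → R p q = 0) ∧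
  ∀ (i : ℕ), i < k → ∀ (him : i < m) (hin : i < n),
    IsGreatest {x : ℝ | ∃ j : Fin n, i ≤ j.val ∧ x = tailNorm R i j}
      ‖R ⟨i, him⟩ ⟨i, hin⟩‖

/-- `blkdiag hsm U` is the block-diagonal `m×m` matrix with the `s×s` identity in the
upper-left block and `U ∈ ℂ^{(m−s)×(m−s)}` in the lower-right block. -/
noncomputable def blkdiag {m s : ℕ} (hsm : s ≤ m)
    (U : Matrix (Fin (m - s)) (Fin (m - s)) ℂ) : Matrix (Fin m) (Fin m) ℂ :=
  Matrix.of fun i j =>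
    if h : i.val < s ∨ j.val < s then (if i = j then (1 : ℂ) else 0)
    else U ⟨i.val - s, by have := i.isLt; omega⟩ ⟨j.val - s, by have := j.isLt; omega⟩

/-!
With indices counted from 0, the GB(s) form of a matrix can be read off its tail norms
`tailNorm R i j` with `i ≤ s`: column `q` is upper triangular iff its tail below the diagonal has
norm zero, and then `|R(q,q)|` is itself a tail norm. For `i ≤ s`, the rotation `Q̂ᴴ` preserves the
entries above row `i` and the norm of each whole column, hence also the tail norms from row `i` on.
The permutation only reorders the columns, mapping `{j | q ≤ j}` to itself for every `q < s`.
-/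

theorem sum_norm_sq_mulVec_of_conjTranspose_mul_self_eq_one {𝕜 ι κ : Type*} [RCLike 𝕜] [Fintype ι]
    [Fintype κ] [DecidableEq ι] {V : Matrix κ ι 𝕜} (hV : Vᴴ * V = 1) (v : ι → 𝕜) :
    ∑ k, ‖(V *ᵥ v) k‖ ^ 2 = ∑ i, ‖v i‖ ^ 2 := by
  have star_dotProduct_preserved : star (V *ᵥ v) ⬝ᵥ (V *ᵥ v) = star v ⬝ᵥ v := by
    rw [star_mulVec, dotProduct_mulVec, vecMul_vecMul, hV, vecMul_one]
  simp only [dotProduct, Pi.star_apply, RCLike.star_def, RCLike.conj_mul]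
    at star_dotProduct_preserved
  exact_mod_cast star_dotProduct_preserved

theorem le_apply_of_forall_lt_apply_eq {α : Type*} [LinearOrder α] {f : α → α}
    (hf : Function.Injective f) {a b : α} (hfix : ∀ x < a, f x = x) (hab : a ≤ b) :
    a ≤ f b := by
  by_contra! hlt
  have fb_eq : f b = b := hf (hfix (f b) hlt)
  exact hab.not_gt (fb_eq ▸ hlt)

section TailNorm

variable {m n : ℕ} {R : Matrix (Fin m) (Fin n) ℂ}

theorem tailNorm_nonneg (R : Matrix (Fin m) (Fin n) ℂ) (i : ℕ) (j : Fin n) :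
    0 ≤ tailNorm R i j :=
  Real.sqrt_nonneg _

theorem tailNorm_sq (R : Matrix (Fin m) (Fin n) ℂ) (i : ℕ) (j : Fin n) :
    tailNorm R i j ^ 2 = ∑ p : Fin m with i ≤ p.val, ‖R p j‖ ^ 2 := by
  rw [tailNorm, ← Finset.sum_filter, Real.sq_sqrt (by positivity)]

theorem tailNorm_eq_zero_iff {i : ℕ} {j : Fin n} :
    tailNorm R i j = 0 ↔ ∀ p : Fin m, i ≤ p.val → R p j = 0 := by
  rw [← sq_eq_zero_iff, tailNorm_sq, Finset.sum_eq_zero_iff_of_nonneg fun _ _ => by positivity]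
  simp

theorem tailNorm_eq_norm_apply_of_tailNorm_succ_eq_zero {p : Fin m} {j : Fin n}
    (h : tailNorm R (p.val + 1) j = 0) :
    tailNorm R p.val j = ‖R p j‖ := by
  rw [← sq_eq_sq₀ (tailNorm_nonneg R p.val j) (norm_nonneg _), tailNorm_sq]
  refine Finset.sum_eq_single_of_mem p (by simp) fun r hr hrp => ?_
  have hpr : p.val ≤ r.val := (Finset.mem_filter.mp hr).2
  simp [tailNorm_eq_zero_iff.mp h r (by omega)]

theorem sum_lt_add_tailNorm_sq (R : Matrix (Fin m) (Fin n) ℂ) (i : ℕ) (j : Fin n) :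
    ∑ p : Fin m with p.val < i, ‖R p j‖ ^ 2 + tailNorm R i j ^ 2 = ∑ p, ‖R p j‖ ^ 2 := by
  simp only [tailNorm_sq, ← not_lt, Finset.sum_filter_add_sum_filter_not]

theorem tailNorm_mul_of_conjTranspose_mul_self_eq_one {V : Matrix (Fin m) (Fin m) ℂ}
    (hV : Vᴴ * V = 1) {i : ℕ} (hhead : ∀ p : Fin m, p.val < i → V p = Pi.single p 1)
    (R : Matrix (Fin m) (Fin n) ℂ) (j : Fin n) : tailNorm (V * R) i j = tailNorm R i j := by
  have column_norm : ∑ p, ‖(V * R) p j‖ ^ 2 = ∑ p, ‖R p j‖ ^ 2 :=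
    sum_norm_sq_mulVec_of_conjTranspose_mul_self_eq_one hV fun p => R p j
  have head_norm : ∑ p : Fin m with p.val < i, ‖(V * R) p j‖ ^ 2 =
      ∑ p : Fin m with p.val < i, ‖R p j‖ ^ 2 := by
    refine Finset.sum_congr rfl fun p hp => ?_
    rw [mul_apply_eq_vecMul, hhead p (Finset.mem_filter.mp hp).2, single_one_vecMul, row_apply]
  rw [← sum_lt_add_tailNorm_sq (V * R) i, ← sum_lt_add_tailNorm_sq R i, head_norm]
    at column_norm
  exact (sq_eq_sq₀ (tailNorm_nonneg _ i j) (tailNorm_nonneg R i j)).mp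
    (add_left_cancel column_norm)

theorem tailNorm_mul_permMatrix (R : Matrix (Fin m) (Fin n) ℂ) (σ : Equiv.Perm (Fin n)) (i : ℕ)
    (j : Fin n) : tailNorm (R * σ.permMatrix ℂ) i j = tailNorm R i (σ.symm j) := by
  simp only [tailNorm, Equiv.Perm.permMatrix, PEquiv.mul_toMatrix_toPEquiv, submatrix_apply, id]

theorem isGB_iff_tailNorm {k : ℕ} :
    IsGB k R ↔ ∀ q : Fin n, q.val < k →
      tailNorm R (q.val + 1) q = 0 ∧ ∀ j, q ≤ j → tailNorm R q.val j ≤ tailNorm R q.val q := by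
  constructor
  · rintro ⟨triangular, maximal⟩ q hq
    have tail_zero : tailNorm R (q.val + 1) q = 0 :=
      tailNorm_eq_zero_iff.mpr fun p hp => triangular p q hq hp
    refine ⟨tail_zero, fun j hj => ?_⟩
    rcases lt_or_ge q.val m with hqm | hmq
    · rw [tailNorm_eq_norm_apply_of_tailNorm_succ_eq_zero (p := ⟨q.val, hqm⟩) tail_zero]
      exact (maximal q.val hq hqm q.isLt).2 ⟨j, hj, rfl⟩
    · have tail_empty : tailNorm R q.val j = 0 :=
        tailNorm_eq_zero_iff.mpr fun p hp => by omega
      exact tail_empty.trans_le (tailNorm_nonneg R q.val q)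
  · refine fun h => ⟨fun p q hq hqp => tailNorm_eq_zero_iff.mp (h q hq).1 p hqp, ?_⟩
    intro i hi him hin
    obtain ⟨tail_zero, maximal⟩ := h ⟨i, hin⟩ hi
    rw [← tailNorm_eq_norm_apply_of_tailNorm_succ_eq_zero (p := ⟨i, him⟩) tail_zero]
    refine ⟨⟨⟨i, hin⟩, le_rfl, rfl⟩, ?_⟩
    rintro _ ⟨j, hj, rfl⟩
    exact maximal j hj

end TailNorm

namespace IsGB

variable {m n k : ℕ} {R : Matrix (Fin m) (Fin n) ℂ}

theorem mul_of_conjTranspose_mul_self_eq_one (hR : IsGB k R) {V : Matrix (Fin m) (Fin m) ℂ}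
    (hV : Vᴴ * V = 1) (hhead : ∀ p : Fin m, p.val < k → V p = Pi.single p 1) :
    IsGB k (V * R) := by
  have tailNorm_eq : ∀ i ≤ k, ∀ j, tailNorm (V * R) i j = tailNorm R i j := fun i hi =>
    tailNorm_mul_of_conjTranspose_mul_self_eq_one hV (fun p hp => hhead p (hp.trans_le hi)) R
  rw [isGB_iff_tailNorm] at hR ⊢
  intro q hq
  simpa only [tailNorm_eq (q.val + 1) hq, tailNorm_eq q.val hq.le] using hR q hq

theorem mul_permMatrix (hR : IsGB k R) {σ : Equiv.Perm (Fin n)}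
    (hfix : ∀ j : Fin n, j.val < k → σ j = j) : IsGB k (R * σ.permMatrix ℂ) := by
  have symm_fix : ∀ j : Fin n, j.val < k → σ.symm j = j := fun j hj =>
    (Equiv.symm_apply_eq σ).mpr (hfix j hj).symm
  rw [isGB_iff_tailNorm] at hR ⊢
  intro q hq
  obtain ⟨tail_zero, maximal⟩ := hR q hq
  simp only [tailNorm_mul_permMatrix, symm_fix q hq]
  exact ⟨tail_zero, fun j hqj => maximal (σ.symm j) <|
    le_apply_of_forall_lt_apply_eq σ.symm.injective
      (fun x hxq => symm_fix x (lt_trans hxq hq)) hqj⟩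

end IsGB

section BlockDiagonal

variable {m s : ℕ} (hsm : s ≤ m) (U : Matrix (Fin (m - s)) (Fin (m - s)) ℂ)

theorem blkdiag_eq_reindex_fromBlocks :
    blkdiag hsm U =
      reindex (finSumFinEquiv.trans (finCongr (Nat.add_sub_of_le hsm)))
        (finSumFinEquiv.trans (finCongr (Nat.add_sub_of_le hsm)))
        (fromBlocks (1 : Matrix (Fin s) (Fin s) ℂ) 0 0 U) := by
  rw [← Equiv.symm_apply_eq]
  ext (a | a) (b | b) <;> simp [blkdiag, one_apply, Fin.ext_iff] <;> omega

variable {U} in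
theorem blkdiag_mem_unitaryGroup (hU : U ∈ unitaryGroup (Fin (m - s)) ℂ) :
    blkdiag hsm U ∈ unitaryGroup (Fin m) ℂ := by
  rw [mem_unitaryGroup_iff, star_eq_conjTranspose] at hU ⊢
  rw [blkdiag_eq_reindex_fromBlocks, conjTranspose_reindex, fromBlocks_conjTranspose]
  simp only [reindex_apply, submatrix_mul_equiv, fromBlocks_multiply, conjTranspose_one,
    conjTranspose_zero, hU, Matrix.mul_one, Matrix.mul_zero, Matrix.zero_mul, add_zero, zero_add,
    fromBlocks_one, submatrix_one_equiv]

theorem conjTranspose_blkdiag_apply_of_lt {p : Fin m} (hp : p.val < s) :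
    (blkdiag hsm U)ᴴ p = Pi.single p 1 := by
  ext q
  simp [blkdiag, hp, Pi.single_apply]

end BlockDiagonal

/-- If `R₀` is in GB(s) form, `U` is unitary, `Q̂ = blkdiag(I_s, U)`, and `P` is a
permutation matrix whose underlying permutation fixes every index `j ≤ s`, then `Q̂ᴴ R₀ P` is in
GB(s) form. -/
theorem gb_preserved_by_trailing_rotation_and_permutation {m n s : ℕ} (hsm : s ≤ m)
    (R₀ : Matrix (Fin m) (Fin n) ℂ) (hGB : IsGB s R₀)
    (U : Matrix (Fin (m - s)) (Fin (m - s)) ℂ)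
    (hU : U ∈ Matrix.unitaryGroup (Fin (m - s)) ℂ)
    (σ : Equiv.Perm (Fin n)) (hfix : ∀ j : Fin n, j.val < s → σ j = j) :
    IsGB s ((blkdiag hsm U)ᴴ * R₀ * σ.permMatrix ℂ) := by
  have isometry : (blkdiag hsm U)ᴴᴴ * (blkdiag hsm U)ᴴ = 1 := by
    rw [conjTranspose_conjTranspose]
    exact mem_unitaryGroup_iff.mp (blkdiag_mem_unitaryGroup hsm hU)
  have rotated : IsGB s ((blkdiag hsm U)ᴴ * R₀) :=
    hGB.mul_of_conjTranspose_mul_self_eq_one isometry fun _ =>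
      conjTranspose_blkdiag_apply_of_lt hsm U
  exact rotated.mul_permMatrix hfix
end

section
/- Let A ∈ ℂ^{m×n}, let Q ∈ ℂ^{m×m} be unitary, let Π ∈ ℂ^{n×n} be a permutation matrix, and suppose R = Q* A Π is in GB(k) form with R(r,r) ≠ 0 for all 1 ≤ r < k. Then for each 1 ≤ i ≤ k, letting P_i denote the orthogonal projection of ℂ^m onto the orthogonal complement of span{(AΠ)(:,1), …, (AΠ)(:,i−1)}, it holds that ‖P_i (AΠ)(:,i)‖₂ = |R(i,i)| and ‖P_i (AΠ)(:,i)‖₂ ≥ ‖P_i (AΠ)(:,j)‖₂ for every i ≤ j ≤ n. -/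
open Matrix

/-- `colE A j` is column `j` of `A`, viewed as a vector in the Euclidean space `ℂ^m`
(with the standard Hermitian inner product). -/
noncomputable def colE {m n : ℕ} (A : Matrix (Fin m) (Fin n) ℂ) (j : Fin n) :
    EuclideanSpace ℂ (Fin m) :=
  WithLp.toLp 2 (fun p => A p j)

/-!
Write `B = Q R` with the columns `e p` of `Q` orthonormal, so that `R p j` are the coordinates of
the column `B_j` in the `e p`. Triangularity makes `e p`, `i ≤ p`, orthogonal to the columns `B_q`,
`q < i`. Conversely, for `p < i ≤ j` the component `R p j • e p` lies in the span of those columns,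
by induction on `p`: if `R p p ≠ 0`, solve `B_p = ∑ p' ≤ p, R p' p • e p'` for `e p`; if
`R p p = 0`, maximality of the pivot forces `R p j = 0`. Hence the projection of `B_j` is
`∑ p ≥ i, R p j • e p`, whose norm is the tail norm bounded by the pivot `|R i i|`.
-/

section LeadingSpan

variable {K E : Type*} {m n : ℕ}

/-- The span of the first `i` vectors of a finite family, i.e. of those with 0-based index below
`i`. For the columns of a matrix, it is the subspace spanned by the columns selected before
step `i`. -/
def leadingSpan (K : Type*) [Semiring K] [AddCommMonoid E] [Module K E]
    (v : Fin n → E) (i : ℕ) : Submodule K E :=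
  Submodule.span K {x | ∃ q : Fin n, q.val < i ∧ x = v q}

instance finiteDimensional_leadingSpan [DivisionRing K] [AddCommGroup E] [Module K E]
    (v : Fin n → E) (i : ℕ) : FiniteDimensional K (leadingSpan K v i) :=
  FiniteDimensional.span_of_finite K <|
    (Set.finite_range v).subset fun _ ⟨q, _, hq⟩ => ⟨q, hq.symm⟩

theorem smul_mem_leadingSpan [DivisionRing K] [AddCommGroup E] [Module K E]
    {R : Matrix (Fin m) (Fin n) K} {i : ℕ} (e : Fin m → E)
    (htri : ∀ p q, q.val < i → q.val < p.val → R p q = 0)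
    (hpivot : ∀ (p : Fin m) (hpn : p.val < n), p.val < i → R p ⟨p, hpn⟩ = 0 →
      ∀ j : Fin n, p.val ≤ j.val → R p j = 0)
    (p : Fin m) (hpi : p.val < i) (j : Fin n) (hpj : p.val ≤ j.val) :
    R p j • e p ∈ leadingSpan K (fun q => ∑ p, R p q • e p) i := by
  induction p using WellFoundedLT.induction generalizing j with
  | ind p ih =>
    have hpn : p.val < n := hpj.trans_lt j.isLt
    by_cases hdiag : R p ⟨p, hpn⟩ = 0
    · rw [hpivot p hpn hpi hdiag j hpj, zero_smul]
      exact zero_mem _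
    · refine Submodule.smul_mem _ _ ((Submodule.smul_mem_iff _ hdiag).1 ?_)
      have hcol : ∑ p', R p' ⟨p, hpn⟩ • e p' ∈ leadingSpan K (fun q => ∑ p, R p q • e p) i :=
        Submodule.subset_span ⟨⟨p, hpn⟩, hpi, rfl⟩
      rw [← Finset.add_sum_erase _ _ (Finset.mem_univ p)] at hcol
      refine (Submodule.add_mem_iff_left _ (Submodule.sum_mem _ fun p' hp' => ?_)).1 hcol
      rcases lt_or_gt_of_ne (Finset.ne_of_mem_erase hp') with hlt | hgt
      · exact ih p' hlt (lt_trans hlt hpi) _ hlt.le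
      · rw [htri p' ⟨p, hpn⟩ hpi hgt, zero_smul]
        exact zero_mem _

end LeadingSpan

section Orthonormal

variable {𝕜 E : Type*} [RCLike 𝕜] [NormedAddCommGroup E] [InnerProductSpace 𝕜 E]

theorem norm_sum_smul_of_orthonormal {ι : Type*} {e : ι → E} (he : Orthonormal 𝕜 e)
    (c : ι → 𝕜) (s : Finset ι) :
    ‖∑ p ∈ s, c p • e p‖ = √(∑ p ∈ s, ‖c p‖ ^ 2) := by
  rw [norm_eq_sqrt_re_inner (𝕜 := 𝕜), he.inner_sum, map_sum]
  simp only [RCLike.conj_mul, ← RCLike.ofReal_pow, RCLike.ofReal_re]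

variable {m n : ℕ} {R : Matrix (Fin m) (Fin n) 𝕜} {e : Fin m → E} {i : ℕ}

theorem apply_mem_orthogonal_leadingSpan (he : Orthonormal 𝕜 e)
    (htri : ∀ p q, q.val < i → q.val < p.val → R p q = 0) {p : Fin m} (hip : i ≤ p.val) :
    e p ∈ (leadingSpan 𝕜 (fun q => ∑ p, R p q • e p) i)ᗮ := by
  rw [← Submodule.span_singleton_le_iff_mem, ← Submodule.isOrtho_iff_le, leadingSpan,
    Submodule.isOrtho_span]
  rintro _ rfl _ ⟨q, hq, rfl⟩
  rw [he.inner_right_fintype, htri p q hq (hq.trans_le hip)]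

theorem starProjection_orthogonal_leadingSpan (he : Orthonormal 𝕜 e)
    (htri : ∀ p q, q.val < i → q.val < p.val → R p q = 0)
    (hpivot : ∀ (p : Fin m) (hpn : p.val < n), p.val < i → R p ⟨p, hpn⟩ = 0 →
      ∀ j : Fin n, p.val ≤ j.val → R p j = 0)
    {j : Fin n} (hij : i ≤ j.val) :
    (leadingSpan 𝕜 (fun q => ∑ p, R p q • e p) i)ᗮ.starProjection (∑ p, R p j • e p) =
      ∑ p with i ≤ p.val, R p j • e p := by
  refine Submodule.eq_starProjection_of_mem_orthogonal'
    (Submodule.sum_mem _ fun p hp => Submodule.smul_mem _ _ ?_)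
    (Submodule.le_orthogonal_orthogonal _ (Submodule.sum_mem _ fun p hp => ?_))
    (Finset.sum_filter_add_sum_filter_not _ (fun p : Fin m => i ≤ p.val) _).symm
  · exact apply_mem_orthogonal_leadingSpan he htri (Finset.mem_filter.1 hp).2
  · have hpi : p.val < i := not_le.1 (Finset.mem_filter.1 hp).2
    exact smul_mem_leadingSpan e htri hpivot p hpi j (hpi.le.trans hij)

end Orthonormal

section Columns

variable {l m n : ℕ}

theorem orthonormal_colE {Q : Matrix (Fin l) (Fin m) ℂ} (hQ : Qᴴ * Q = 1) :
    Orthonormal ℂ (colE Q) := by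
  rw [orthonormal_iff_ite]
  intro a b
  rw [← Matrix.one_apply, ← hQ, Matrix.mul_apply]
  simp [colE, PiLp.inner_apply, mul_comm]

theorem colE_mul (Q : Matrix (Fin l) (Fin m) ℂ) (R : Matrix (Fin m) (Fin n) ℂ) :
    colE (Q * R) = fun j => ∑ p, R p j • colE Q p := by
  ext j x
  simp [colE, Matrix.mul_apply, mul_comm]

theorem tailNorm_eq_sqrt_sum_filter (R : Matrix (Fin m) (Fin n) ℂ) (i : ℕ) (j : Fin n) :
    tailNorm R i j = √(∑ p with i ≤ p.val, ‖R p j‖ ^ 2) := by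
  rw [tailNorm, Finset.sum_filter]

theorem norm_apply_le_tailNorm (R : Matrix (Fin m) (Fin n) ℂ) {i : ℕ} {p : Fin m}
    (hip : i ≤ p.val) (j : Fin n) : ‖R p j‖ ≤ tailNorm R i j := by
  rw [tailNorm_eq_sqrt_sum_filter]
  exact Real.le_sqrt_of_sq_le <| Finset.single_le_sum (f := fun p => ‖R p j‖ ^ 2)
    (fun _ _ => sq_nonneg _) (by simpa using hip)

end Columns

namespace IsGB

variable {l m n k : ℕ} {R : Matrix (Fin m) (Fin n) ℂ}

theorem tailNorm_le (hR : IsGB k R) {i : ℕ} (hik : i < k) (him : i < m) {j : Fin n}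
    (hij : i ≤ j.val) : tailNorm R i j ≤ ‖R ⟨i, him⟩ ⟨i, hij.trans_lt j.isLt⟩‖ :=
  (hR.2 i hik him _).2 ⟨j, hij, rfl⟩

theorem tailNorm_diag (hR : IsGB k R) {i : ℕ} (hik : i < k) (him : i < m) (hin : i < n) :
    tailNorm R i ⟨i, hin⟩ = ‖R ⟨i, him⟩ ⟨i, hin⟩‖ :=
  (hR.tailNorm_le hik him le_rfl).antisymm (norm_apply_le_tailNorm R le_rfl _)

theorem apply_eq_zero_of_diag_eq_zero (hR : IsGB k R) {p : Fin m} (hpn : p.val < n)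
    (hpk : p.val < k) (hdiag : R p ⟨p, hpn⟩ = 0) {j : Fin n} (hpj : p.val ≤ j.val) :
    R p j = 0 := by
  rw [← norm_le_zero_iff]
  calc ‖R p j‖ ≤ tailNorm R p j := norm_apply_le_tailNorm R le_rfl j
    _ ≤ ‖R p ⟨p, hpn⟩‖ := hR.tailNorm_le hpk p.isLt hpj
    _ = 0 := by rw [hdiag, norm_zero]

theorem norm_starProjection_colE (hR : IsGB k R) {Q : Matrix (Fin l) (Fin m) ℂ}
    (hQ : Qᴴ * Q = 1) {i : ℕ} (hik : i ≤ k) {j : Fin n} (hij : i ≤ j.val) :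
    ‖(leadingSpan ℂ (colE (Q * R)) i)ᗮ.starProjection (colE (Q * R) j)‖ = tailNorm R i j := by
  have he := orthonormal_colE hQ
  have htri : ∀ p q, q.val < i → q.val < p.val → R p q = 0 :=
    fun p q hqi hqp => hR.1 p q (hqi.trans_le hik) hqp
  have hproj := starProjection_orthogonal_leadingSpan he htri (fun p hpn hpi hdiag _ hpj =>
    hR.apply_eq_zero_of_diag_eq_zero hpn (hpi.trans_le hik) hdiag hpj) hij
  rw [colE_mul, hproj, norm_sum_smul_of_orthonormal he, tailNorm_eq_sqrt_sum_filter]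

end IsGB

theorem gb_greedy_optimality_general {l m n k : ℕ} {Q : Matrix (Fin l) (Fin m) ℂ}
    (hQ : Qᴴ * Q = 1) {R : Matrix (Fin m) (Fin n) ℂ} (hR : IsGB k R)
    {i : ℕ} (hik : i < k) (him : i < m) (hin : i < n) :
    ‖(leadingSpan ℂ (colE (Q * R)) i)ᗮ.starProjection (colE (Q * R) ⟨i, hin⟩)‖ =
        ‖R ⟨i, him⟩ ⟨i, hin⟩‖ ∧
      ∀ j : Fin n, i ≤ j.val →
        ‖(leadingSpan ℂ (colE (Q * R)) i)ᗮ.starProjection (colE (Q * R) j)‖ ≤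
          ‖(leadingSpan ℂ (colE (Q * R)) i)ᗮ.starProjection (colE (Q * R) ⟨i, hin⟩)‖ := by
  have hpivot := (hR.norm_starProjection_colE hQ hik.le le_rfl).trans
    (hR.tailNorm_diag hik him hin)
  refine ⟨hpivot, fun j hij => ?_⟩
  rw [hpivot, hR.norm_starProjection_colE hQ hik.le hij]
  exact hR.tailNorm_le hik him hij

/-- **greedy optimality of GB(k) form.** Suppose `R = Qᴴ A Π` is in GB(k) form
(`Q` unitary, `Π` the permutation matrix of `σ`) with `R(r,r) ≠ 0` for `1 ≤ r < k`. Then for each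
`1 ≤ i ≤ k`, letting `P_i` be the orthogonal projection onto the orthogonal complement of the
span of the first `i−1` columns of `AΠ`, we have `‖P_i (AΠ)(:,i)‖₂ = |R(i,i)|` and
`‖P_i (AΠ)(:,i)‖₂ ≥ ‖P_i (AΠ)(:,j)‖₂` for every `i ≤ j ≤ n`. -/
theorem gb_greedy_optimality {m n : ℕ} (k : ℕ) (hkm : k ≤ m) (hkn : k ≤ n)
    (A : Matrix (Fin m) (Fin n) ℂ)
    (Q : Matrix (Fin m) (Fin m) ℂ) (hQ : Q ∈ Matrix.unitaryGroup (Fin m) ℂ)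
    (σ : Equiv.Perm (Fin n))
    (R : Matrix (Fin m) (Fin n) ℂ) (hR : R = Qᴴ * A * σ.permMatrix ℂ)
    (hGB : IsGB k R)
    (hdiag : ∀ (r : ℕ) (hr : r + 1 < k), R ⟨r, by omega⟩ ⟨r, by omega⟩ ≠ 0) :
    ∀ (i : ℕ) (hi1 : 1 ≤ i) (hik : i ≤ k),
      ‖(Submodule.orthogonalProjectionOnto
          (Submodule.span ℂ {v : EuclideanSpace ℂ (Fin m) |
              ∃ q : Fin n, q.val + 1 < i ∧ v = colE (A * σ.permMatrix ℂ) q})ᗮ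
          (colE (A * σ.permMatrix ℂ) ⟨i - 1, by omega⟩) : EuclideanSpace ℂ (Fin m))‖ =
        ‖R ⟨i - 1, by omega⟩ ⟨i - 1, by omega⟩‖ ∧
      ∀ j : Fin n, i - 1 ≤ j.val →
        ‖(Submodule.orthogonalProjectionOnto
            (Submodule.span ℂ {v : EuclideanSpace ℂ (Fin m) |
                ∃ q : Fin n, q.val + 1 < i ∧ v = colE (A * σ.permMatrix ℂ) q})ᗮ
            (colE (A * σ.permMatrix ℂ) j) : EuclideanSpace ℂ (Fin m))‖ ≤
          ‖(Submodule.orthogonalProjectionOnto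
              (Submodule.span ℂ {v : EuclideanSpace ℂ (Fin m) |
                  ∃ q : Fin n, q.val + 1 < i ∧ v = colE (A * σ.permMatrix ℂ) q})ᗮ
              (colE (A * σ.permMatrix ℂ) ⟨i - 1, by omega⟩) : EuclideanSpace ℂ (Fin m))‖ := by
  intro i hi1 hik
  obtain ⟨i, rfl⟩ := Nat.exists_eq_add_of_le' hi1
  have hQR : A * σ.permMatrix ℂ = Q * R := by
    rw [hR, Matrix.mul_assoc Qᴴ, ← Matrix.mul_assoc Q, ← star_eq_conjTranspose,
      mem_unitaryGroup_iff.1 hQ, Matrix.one_mul]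
  simpa only [hQR, leadingSpan, Submodule.coe_orthogonalProjectionOnto_apply,
    Nat.add_lt_add_iff_right, Nat.add_sub_cancel] using
    gb_greedy_optimality_general (mem_unitaryGroup_iff'.1 hQ) hGB hik (by omega) (by omega)
end
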